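/- Suppose n > 2r. Define the lower confidence bound L_{n,r}(x) = θ̂_r^{GT}(X_n) − [√(2/C(n,2r)) + 2√2/C(n,r)]·√(C_{n,r}·x) − [4/√C(n,2r) + (26/3)/C(n,r) + 16r/C(n,r+1)]·x − (2r/C(n,r+1))·C_{n,r}, where C(n,k) denotes the binomial coefficient. Then for every x > 0, with probability at least 1 − 6e^{−x} under P, θ_r(P;X_n) ≥ max(0, L_{n,r}(x)). -/

import Mathlib

open MeasureTheory ProbabilityTheory Real Filter

noncomputable section

/-- The law of an i.i.d. sample of size `n` from the discrete distribution `P` on `ℕ`. -/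
def sampleMeasure (P : PMF ℕ) (n : ℕ) : Measure (Fin n → ℕ) :=
  Measure.pi fun _ => P.toMeasure

/-- The probability mass of symbol `j` under `P`, as a real number. -/
def pReal (P : PMF ℕ) (j : ℕ) : ℝ := (P j).toReal

/-- Empirical frequency of the symbol `j` in the sample `ω`. -/
def freq {n : ℕ} (ω : Fin n → ℕ) (j : ℕ) : ℕ :=
  (Finset.univ.filter fun i => ω i = j).card

/-- The `r`-order missing mass `θ_r(P; X_n)`. -/
def missingMass (p : ℕ → ℝ) (r : ℕ) {n : ℕ} (ω : Fin n → ℕ) : ℝ :=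
  ∑' j, p j ^ r * (if freq ω j = 0 then 1 else 0)

/-- `M_{n,r}`: the number of distinct symbols appearing exactly `r` times in the sample. -/
def Mcount {n : ℕ} (ω : Fin n → ℕ) (r : ℕ) : ℝ :=
  ∑' j, if freq ω j = r then 1 else 0

/-- `C_{n,r}`: the number of distinct symbols appearing at least `r` times in the sample. -/
def Ccount {n : ℕ} (ω : Fin n → ℕ) (r : ℕ) : ℝ :=
  ∑' j, if r ≤ freq ω j then 1 else 0

/-- The Good–Turing-type estimator `θ̂_r^{GT}(X_n) = M_{n,r} / (n choose r)`. -/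
def gtEst {n : ℕ} (ω : Fin n → ℕ) (r : ℕ) : ℝ := Mcount ω r / (n.choose r)

/-- The lower confidence bound `𝔏_{n,r}(x)`. -/
def Lbound {n : ℕ} (r : ℕ) (x : ℝ) (ω : Fin n → ℕ) : ℝ :=
  gtEst ω r
    - (Real.sqrt (2 / (n.choose (2 * r))) + 2 * Real.sqrt 2 / (n.choose r))
        * Real.sqrt (Ccount ω r * x)
    - (4 / Real.sqrt (n.choose (2 * r)) + (26 / 3) / (n.choose r)
        + 16 * r / (n.choose (r + 1))) * x
    - (2 * r / (n.choose (r + 1))) * Ccount ω r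

/-!
The occupation numbers of the symbols are negatively associated (by induction on the sample size),
so the moment generating function of a weighted number of symbols `∑ w_j 1(Y_{n,j} ∈ s)`, with `s`
an upper or a lower set, is at most that of independent Poisson variables with the same means.
This yields sub-Poissonian tails for `C_{n,r}` and lower sub-Gaussian tails for `C_{n,r}`,
`C_{n,r+1}` and `θ_r`: four events of probability at most `e^{-x}` each. The variance proxy of
`θ_r` is `E θ_{2r} ≤ E C_{n,r} / C(n,2r)`, since `E M_{n,k} = C(n,k) E_{n-k} θ_k`, where `E_m` is
the expectation for a sample of size `m`. The same identity with `k = r` shows that `θ̂_r^{GT}` is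
an unbiased estimator of `E_{n-r} θ_r`, which by Bernoulli's inequality exceeds `E_n θ_r` by at
most `r E M_{n,r+1} / C(n,r+1)`. Off the four events every unknown `E C_{n,r}` in the resulting
deviations is replaced by the observed `C_{n,r}`.
-/

lemma one_sub_four_mul_le_of_measureReal_le {α : Type*} [MeasurableSpace α] {μ : Measure α}
    [IsProbabilityMeasure μ] {s s₁ s₂ s₃ s₄ : Set α} (hs : MeasurableSet s) {ε : ℝ}
    (h₁ : μ.real s₁ ≤ ε) (h₂ : μ.real s₂ ≤ ε) (h₃ : μ.real s₃ ≤ ε) (h₄ : μ.real s₄ ≤ ε)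
    (h : ∀ a ∉ s₁ ∪ s₂ ∪ s₃ ∪ s₄, a ∈ s) :
    1 - ENNReal.ofReal (4 * ε) ≤ μ s := by
  have hcompl : μ.real sᶜ ≤ 4 * ε :=
    calc μ.real sᶜ ≤ μ.real (s₁ ∪ s₂ ∪ s₃ ∪ s₄) :=
          measureReal_mono fun a ha => by_contra fun ha' => ha (h a ha')
      _ ≤ μ.real s₁ + μ.real s₂ + μ.real s₃ + μ.real s₄ := by
          grw [measureReal_union_le, measureReal_union_le, measureReal_union_le]
      _ ≤ 4 * ε := by linarith
  rw [tsub_le_iff_right, ← prob_add_prob_compl (μ := μ) hs, ← ofReal_measureReal (s := sᶜ)]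
  gcongr

lemma integrable_of_forall_abs_le {α : Type*} [MeasurableSpace α] [DiscreteMeasurableSpace α]
    {μ : Measure α} [IsFiniteMeasure μ] {f : α → ℝ} {B : ℝ} (hf : ∀ a, |f a| ≤ B) :
    Integrable f μ :=
  .of_bound Measurable.of_discrete.aestronglyMeasurable B (.of_forall hf)

lemma monotone_indicator_one {α : Type*} [Preorder α] {s : Set α} (hs : IsUpperSet s) :
    Monotone (s.indicator (1 : α → ℝ)) := by
  intro a b hab
  by_cases ha : a ∈ s
  · simp [ha, hs hab ha]
  · rw [Set.indicator_of_notMem ha]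
    exact Set.indicator_nonneg (fun _ _ => zero_le_one) b

lemma antitone_indicator_one {α : Type*} [Preorder α] {s : Set α} (hs : IsLowerSet s) :
    Antitone (s.indicator (1 : α → ℝ)) := by
  intro a b hab
  by_cases hb : b ∈ s
  · simp [hb, hs hab hb]
  · rw [Set.indicator_of_notMem hb]
    exact Set.indicator_nonneg (fun _ _ => zero_le_one) a

/-! ### Tail bounds from the moment generating function -/

section Chernoff

variable {Ω : Type*} [MeasurableSpace Ω] {μ : Measure Ω} [IsFiniteMeasure μ] {X : Ω → ℝ}

lemma exp_neg_le_one_sub_add_sq_div_two {u : ℝ} (hu : 0 ≤ u) : exp (-u) ≤ 1 - u + u ^ 2 / 2 := by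
  rw [exp_neg, inv_le_iff_one_le_mul₀ (exp_pos u)]
  calc (1 : ℝ) ≤ (1 - u + u ^ 2 / 2) * (1 + u + u ^ 2 / 2) := by nlinarith [sq_nonneg (u ^ 2)]
    _ ≤ (1 - u + u ^ 2 / 2) * exp u := by
        gcongr
        · nlinarith [sq_nonneg (u - 1)]
        · exact quadratic_le_exp_of_nonneg hu

lemma sqrt_two_mul_eq_mul_sqrt_div {v x : ℝ} (hv : 0 < v) : √(2 * v * x) = v * √(2 * x / v) := by
  rw [show 2 * v * x = v ^ 2 * (2 * x / v) by field_simp, sqrt_mul (sq_nonneg v), sqrt_sq hv.le]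

lemma measureReal_le_sub_sqrt_le_exp_neg {m v x : ℝ} (hv : 0 < v) (hx : 0 ≤ x)
    (hint : ∀ t ≤ 0, Integrable (fun ω => exp (t * X ω)) μ)
    (hmgf : ∀ t ≤ 0, mgf X μ t ≤ exp (t * m + t ^ 2 / 2 * v)) :
    μ.real {ω | X ω ≤ m - √(2 * v * x)} ≤ exp (-x) := by
  rw [sqrt_two_mul_eq_mul_sqrt_div hv]
  set l := √(2 * x / v)
  have hl : -l ≤ 0 := neg_nonpos.2 (sqrt_nonneg _)
  have hlv : l ^ 2 * v = 2 * x := by rw [sq_sqrt (by positivity)]; field_simp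
  calc μ.real {ω | X ω ≤ m - v * l} ≤ exp (- -l * (m - v * l)) * mgf X μ (-l) :=
        measure_le_le_exp_mul_mgf _ hl (hint _ hl)
    _ ≤ exp (- -l * (m - v * l)) * exp (-l * m + (-l) ^ 2 / 2 * v) := by gcongr; exact hmgf _ hl
    _ = exp (-x) := by rw [← exp_add]; congr 1; linear_combination -hlv / 2

/-- Chernoff's bound at `t = log (1 + u)` with `u = √(2x/v)`; the estimate
`2u / (2 + u) ≤ log (1 + u)` turns it into Bernstein's form. -/
lemma measureReal_add_sqrt_add_le_exp_neg {v x : ℝ} (hv : 0 < v) (hx : 0 ≤ x)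
    (hint : ∀ t, 0 ≤ t → Integrable (fun ω => exp (t * X ω)) μ)
    (hmgf : ∀ t, 0 ≤ t → mgf X μ t ≤ exp ((exp t - 1) * v)) :
    μ.real {ω | v + √(2 * v * x) + x ≤ X ω} ≤ exp (-x) := by
  rw [sqrt_two_mul_eq_mul_sqrt_div hv]
  set u := √(2 * x / v)
  have hu : 0 ≤ u := sqrt_nonneg _
  have huv : u ^ 2 * v = 2 * x := by rw [sq_sqrt (by positivity)]; field_simp
  have ht : 0 ≤ log (1 + u) := log_nonneg (by linarith)
  have hlog : u + u ^ 2 / 2 ≤ log (1 + u) * (1 + u + u ^ 2 / 2) :=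
    calc u + u ^ 2 / 2 ≤ 2 * u / (u + 2) * (1 + u + u ^ 2 / 2) := by
          rw [div_mul_eq_mul_div, le_div_iff₀ (by positivity)]
          nlinarith [pow_nonneg hu 3]
      _ ≤ log (1 + u) * (1 + u + u ^ 2 / 2) := by
          gcongr
          exact le_log_one_add_of_nonneg hu
  calc μ.real {ω | v + v * u + x ≤ X ω}
      ≤ exp (-log (1 + u) * (v + v * u + x)) * mgf X μ (log (1 + u)) :=
        measure_ge_le_exp_mul_mgf _ ht (hint _ ht)
    _ ≤ exp (-log (1 + u) * (v + v * u + x)) * exp ((exp (log (1 + u)) - 1) * v) := by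
        gcongr
        exact hmgf _ ht
    _ ≤ exp (-x) := by
        rw [exp_log (by positivity), ← exp_add, exp_le_exp]
        linear_combination v * hlog + (log (1 + u) - 1) / 2 * huv

end Chernoff

/-! ### Sampling one more point -/

section Sample

variable (P : PMF ℕ) (n : ℕ)

instance : IsProbabilityMeasure (sampleMeasure P n) := by
  unfold sampleMeasure
  infer_instance

lemma freq_of_isEmpty (ω : Fin 0 → ℕ) : freq ω = 0 := by
  funext j
  simp [freq]

lemma freq_cons {n : ℕ} (k : ℕ) (ω : Fin n → ℕ) :
    freq (Fin.cons k ω : Fin (n + 1) → ℕ) = freq ω + Pi.single k 1 := by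
  funext j
  simp only [freq, Pi.add_apply, Finset.card_filter, Fin.sum_univ_succ, Fin.cons_zero,
    Fin.cons_succ, Pi.single_apply]
  rw [add_comm]
  simp [eq_comm]

lemma integral_sampleMeasure_succ {F : (Fin (n + 1) → ℕ) → ℝ}
    (hF : Integrable F (sampleMeasure P (n + 1))) :
    ∫ ω, F ω ∂sampleMeasure P (n + 1) =
      ∫ k, ∫ ω, F (Fin.cons k ω) ∂sampleMeasure P n ∂P.toMeasure := by
  have hpres := (measurePreserving_piFinSuccAbove (fun _ : Fin (n + 1) => P.toMeasure) 0).symm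
  have hemb := MeasurableEquiv.measurableEmbedding
    (MeasurableEquiv.piFinSuccAbove (fun _ : Fin (n + 1) => ℕ) 0).symm
  unfold sampleMeasure at hF ⊢
  rw [← hpres.integral_comp hemb,
    integral_prod (fun z => F ((MeasurableEquiv.piFinSuccAbove _ 0).symm z))
      ((hpres.integrable_comp_emb hemb).2 hF)]
  simp [MeasurableEquiv.piFinSuccAbove_symm_apply, Fin.insertNthEquiv]

lemma integral_freq_succ {f : (ℕ → ℕ) → ℝ} {B : ℝ} (hf : ∀ y, |f y| ≤ B) :
    ∫ ω, f (freq ω) ∂sampleMeasure P (n + 1) =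
      ∫ k, ∫ ω, f (freq ω + Pi.single k 1) ∂sampleMeasure P n ∂P.toMeasure := by
  rw [integral_sampleMeasure_succ P n (integrable_of_forall_abs_le fun ω => hf (freq ω))]
  simp only [freq_cons]

lemma abs_integral_sampleMeasure_le {F : (Fin n → ℕ) → ℝ} {B : ℝ} (hF : ∀ ω, |F ω| ≤ B) :
    |∫ ω, F ω ∂sampleMeasure P n| ≤ B := by
  simpa using norm_integral_le_of_norm_le_const (μ := sampleMeasure P n) (f := F)
    (.of_forall hF)

end Sample

/-! ### Negative association of the counts -/

section NegativeAssociation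

/-- At every point one factor of `(F - a) * (G - b)` vanishes, so `∫ F * G` is affine in the two
means, and what is missing is `(∫ F - a) * (∫ G - b) ≥ 0`. -/
lemma integral_mul_le_of_forall_eq_or_eq {α : Type*} [MeasurableSpace α] {μ : Measure α}
    [IsProbabilityMeasure μ] {F G : α → ℝ} {a b : ℝ} (hF : Integrable F μ) (hG : Integrable G μ)
    (haF : ∀ k, a ≤ F k) (hbG : ∀ k, b ≤ G k) (hFG : ∀ k, F k = a ∨ G k = b) :
    ∫ k, F k * G k ∂μ ≤ (∫ k, F k ∂μ) * ∫ k, G k ∂μ := by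
  have haff : ∀ k, F k * G k = a * G k + F k * b - a * b := fun k => by
    rcases hFG k with h | h <;> rw [h] <;> ring
  have hint : ∫ k, F k * G k ∂μ = a * ∫ k, G k ∂μ + (∫ k, F k ∂μ) * b - a * b := by
    simp_rw [haff]
    rw [integral_sub (by fun_prop) (by fun_prop), integral_add (by fun_prop) (by fun_prop),
      integral_const_mul, integral_mul_const]
    simp
  have ha : a ≤ ∫ k, F k ∂μ := by simpa using integral_mono (integrable_const a) hF haF
  have hb : b ≤ ∫ k, G k ∂μ := by simpa using integral_mono (integrable_const b) hG hbG
  rw [hint]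
  linear_combination mul_nonneg (sub_nonneg.2 ha) (sub_nonneg.2 hb)

lemma apply_add_single_of_dependsOn {f : (ℕ → ℕ) → ℝ} {s : Set ℕ} (hf : DependsOn f s) {k : ℕ}
    (hk : k ∉ s) (y : ℕ → ℕ) : f (y + Pi.single k 1) = f y :=
  hf fun i hi => by simp [ne_of_mem_of_not_mem hi hk]

variable (P : PMF ℕ) (n : ℕ)

lemma integral_freq_le_integral_freq_add_single {f : (ℕ → ℕ) → ℝ} {B : ℝ}
    (hfB : ∀ y, |f y| ≤ B) (hf : Monotone f) (k : ℕ) :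
    ∫ ω, f (freq ω) ∂sampleMeasure P n ≤ ∫ ω, f (freq ω + Pi.single k 1) ∂sampleMeasure P n :=
  integral_mono (integrable_of_forall_abs_le fun ω => hfB _)
    (integrable_of_forall_abs_le fun ω => hfB _) fun ω => hf (le_add_of_nonneg_right (by simp))

theorem integral_mul_freq_le_of_monotone {f g : (ℕ → ℕ) → ℝ} {B C : ℝ} {s t : Set ℕ}
    (hfB : ∀ y, |f y| ≤ B) (hgC : ∀ y, |g y| ≤ C) (hf : Monotone f) (hg : Monotone g)
    (hfs : DependsOn f s) (hgt : DependsOn g t) (hst : Disjoint s t) :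
    ∫ ω, f (freq ω) * g (freq ω) ∂sampleMeasure P n ≤
      (∫ ω, f (freq ω) ∂sampleMeasure P n) * ∫ ω, g (freq ω) ∂sampleMeasure P n := by
  induction n generalizing f g with
  | zero => simp [freq_of_isEmpty]
  | succ n ih =>
    set F : ℕ → ℝ := fun k => ∫ ω, f (freq ω + Pi.single k 1) ∂sampleMeasure P n with hF
    set G : ℕ → ℝ := fun k => ∫ ω, g (freq ω + Pi.single k 1) ∂sampleMeasure P n with hG
    have hFB : ∀ k, |F k| ≤ B := fun k => abs_integral_sampleMeasure_le P n fun ω => hfB _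
    have hGC : ∀ k, |G k| ≤ C := fun k => abs_integral_sampleMeasure_le P n fun ω => hgC _
    have hmul : ∀ {a b : ℝ}, |a| ≤ B → |b| ≤ C → |a * b| ≤ B * C := fun ha hb => by
      rw [abs_mul]
      exact mul_le_mul ha hb (abs_nonneg _) ((abs_nonneg _).trans ha)
    have hfgBC : ∀ y, |f y * g y| ≤ B * C := fun y => hmul (hfB y) (hgC y)
    have hcond : ∀ k, ∫ ω, f (freq ω + Pi.single k 1) * g (freq ω + Pi.single k 1)
        ∂sampleMeasure P n ≤ F k * G k := fun k =>
      ih (f := fun y => f (y + Pi.single k 1)) (g := fun y => g (y + Pi.single k 1))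
        (fun y => hfB _) (fun y => hgC _) (fun y z hyz => hf (by gcongr))
        (fun y z hyz => hg (by gcongr)) (fun y z hyz => hfs fun i hi => by simp [hyz i hi])
        (fun y z hyz => hgt fun i hi => by simp [hyz i hi])
    have hconst : ∀ k, F k = ∫ ω, f (freq ω) ∂sampleMeasure P n ∨
        G k = ∫ ω, g (freq ω) ∂sampleMeasure P n := fun k => by
      by_cases hk : k ∈ s
      · exact .inr (by simp only [hG, apply_add_single_of_dependsOn hgt
          (hst.notMem_of_mem_left hk)])
      · exact .inl (by simp only [hF, apply_add_single_of_dependsOn hfs hk])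
    rw [integral_freq_succ P n hfgBC, integral_freq_succ P n hfB, integral_freq_succ P n hgC]
    calc ∫ k, ∫ ω, f (freq ω + Pi.single k 1) * g (freq ω + Pi.single k 1)
          ∂sampleMeasure P n ∂P.toMeasure ≤ ∫ k, F k * G k ∂P.toMeasure :=
          integral_mono (integrable_of_forall_abs_le fun k =>
            abs_integral_sampleMeasure_le P n fun ω => hfgBC _)
            (integrable_of_forall_abs_le fun k => hmul (hFB k) (hGC k)) hcond
      _ ≤ (∫ k, F k ∂P.toMeasure) * ∫ k, G k ∂P.toMeasure :=
          integral_mul_le_of_forall_eq_or_eq (integrable_of_forall_abs_le hFB)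
            (integrable_of_forall_abs_le hGC)
            (integral_freq_le_integral_freq_add_single P n hfB hf)
            (integral_freq_le_integral_freq_add_single P n hgC hg) hconst

theorem integral_mul_freq_le_of_antitone {f g : (ℕ → ℕ) → ℝ} {B C : ℝ} {s t : Set ℕ}
    (hfB : ∀ y, |f y| ≤ B) (hgC : ∀ y, |g y| ≤ C) (hf : Antitone f) (hg : Antitone g)
    (hfs : DependsOn f s) (hgt : DependsOn g t) (hst : Disjoint s t) :
    ∫ ω, f (freq ω) * g (freq ω) ∂sampleMeasure P n ≤
      (∫ ω, f (freq ω) ∂sampleMeasure P n) * ∫ ω, g (freq ω) ∂sampleMeasure P n := by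
  simpa [integral_neg] using integral_mul_freq_le_of_monotone P n (f := -f) (g := -g)
    (by simpa using hfB) (by simpa using hgC) hf.neg hg.neg
    (fun _ _ h => congrArg Neg.neg (hfs h)) (fun _ _ h => congrArg Neg.neg (hgt h)) hst

theorem integral_prod_freq_le {h : ℕ → ℕ → ℝ} {B : ℕ → ℝ} (h_nonneg : ∀ j m, 0 ≤ h j m)
    (hB : ∀ j m, h j m ≤ B j) (hmono : (∀ j, Monotone (h j)) ∨ ∀ j, Antitone (h j))
    (S : Finset ℕ) :
    ∫ ω, ∏ j ∈ S, h j (freq ω j) ∂sampleMeasure P n ≤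
      ∏ j ∈ S, ∫ ω, h j (freq ω j) ∂sampleMeasure P n := by
  induction S using Finset.induction_on with
  | empty => simp
  | insert a S ha ih =>
    simp only [Finset.prod_insert ha]
    have hbound : ∀ y : ℕ → ℕ, |h a (y a)| ≤ B a := fun y => by
      rw [abs_of_nonneg (h_nonneg a _)]
      exact hB a _
    have hboundS : ∀ y : ℕ → ℕ, |∏ j ∈ S, h j (y j)| ≤ ∏ j ∈ S, B j := fun y => by
      rw [abs_of_nonneg (Finset.prod_nonneg fun j _ => h_nonneg j _)]
      exact Finset.prod_le_prod (fun j _ => h_nonneg j _) fun j _ => hB j _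
    have hdep : DependsOn (fun y : ℕ → ℕ => h a (y a)) {a} := fun y z hyz => by
      simp only [hyz a rfl]
    have hdepS : DependsOn (fun y : ℕ → ℕ => ∏ j ∈ S, h j (y j)) S := fun y z hyz =>
      Finset.prod_congr rfl fun j hj => by rw [hyz j hj]
    have hdisj : Disjoint ({a} : Set ℕ) S := by simpa using ha
    calc ∫ ω, h a (freq ω a) * ∏ j ∈ S, h j (freq ω j) ∂sampleMeasure P n
        ≤ (∫ ω, h a (freq ω a) ∂sampleMeasure P n) *
            ∫ ω, ∏ j ∈ S, h j (freq ω j) ∂sampleMeasure P n := by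
          rcases hmono with hmono | hmono
          · exact integral_mul_freq_le_of_monotone P n hbound hboundS
              (fun y z hyz => hmono a (hyz a))
              (fun y z hyz => Finset.prod_le_prod (fun j _ => h_nonneg j _)
                fun j _ => hmono j (hyz j)) hdep hdepS hdisj
          · exact integral_mul_freq_le_of_antitone P n hbound hboundS
              (fun y z hyz => hmono a (hyz a))
              (fun y z hyz => Finset.prod_le_prod (fun j _ => h_nonneg j _)
                fun j _ => hmono j (hyz j)) hdep hdepS hdisj
      _ ≤ _ := by
          gcongr
          exact integral_nonneg fun ω => h_nonneg a _

end NegativeAssociation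

/-! ### Weighted occupancy sums -/

/-- The probability that the number of occurrences of the symbol `j` in a sample of size `n`
lies in `s`. -/
def occupancyProb (P : PMF ℕ) (n : ℕ) (s : Set ℕ) (j : ℕ) : ℝ :=
  (sampleMeasure P n).real {ω | freq ω j ∈ s}

/-- The total weight of the symbols whose number of occurrences lies in `s`. Both `C_{n,r}`
(`w = 1`, `s = Set.Ici r`) and `θ_r` (`w j = p_j ^ r`, `s = {0}`) have this form. -/
def occupancySum (w : ℕ → ℝ) (s : Set ℕ) {n : ℕ} (ω : Fin n → ℕ) : ℝ :=
  ∑' j, w j * s.indicator 1 (freq ω j)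

section Occupancy

variable (P : PMF ℕ) (n : ℕ) {w : ℕ → ℝ} {s : Set ℕ}

lemma occupancyProb_nonneg (s : Set ℕ) (j : ℕ) : 0 ≤ occupancyProb P n s j :=
  measureReal_nonneg

lemma occupancyProb_mono {t : Set ℕ} (h : s ⊆ t) (j : ℕ) :
    occupancyProb P n s j ≤ occupancyProb P n t j :=
  measureReal_mono fun _ hω => h hω

lemma integral_indicator_freq (s : Set ℕ) (j : ℕ) :
    ∫ ω, s.indicator (1 : ℕ → ℝ) (freq ω j) ∂sampleMeasure P n = occupancyProb P n s j :=
  integral_indicator_one (s := {ω : Fin n → ℕ | freq ω j ∈ s}) .of_discrete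

lemma integrable_indicator_freq (s : Set ℕ) (j : ℕ) :
    Integrable (fun ω => s.indicator (1 : ℕ → ℝ) (freq ω j)) (sampleMeasure P n) :=
  (integrable_const (1 : ℝ)).indicator (s := {ω : Fin n → ℕ | freq ω j ∈ s}) .of_discrete

lemma integral_exp_mul_indicator_freq_le (c : ℝ) (s : Set ℕ) (j : ℕ) :
    ∫ ω, exp (c * s.indicator 1 (freq ω j)) ∂sampleMeasure P n ≤
      exp ((exp c - 1) * occupancyProb P n s j) := by
  have hexp : ∀ m, exp (c * s.indicator 1 m) = (exp c - 1) * s.indicator 1 m + 1 := fun m => by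
    by_cases hm : m ∈ s <;> simp [hm]
  calc ∫ ω, exp (c * s.indicator 1 (freq ω j)) ∂sampleMeasure P n
      = (exp c - 1) * occupancyProb P n s j + 1 := by
        simp only [hexp]
        rw [integral_add ((integrable_indicator_freq P n s j).const_mul _) (integrable_const _),
          integral_const_mul, integral_indicator_freq]
        simp
    _ ≤ exp ((exp c - 1) * occupancyProb P n s j) := add_one_le_exp _

lemma integral_exp_sum_indicator_freq_le {c : ℕ → ℝ}
    (hmono : (∀ j, Monotone fun m => c j * s.indicator 1 m) ∨
      ∀ j, Antitone fun m => c j * s.indicator 1 m) (S : Finset ℕ) :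
    ∫ ω, exp (∑ j ∈ S, c j * s.indicator 1 (freq ω j)) ∂sampleMeasure P n ≤
      exp (∑ j ∈ S, (exp (c j) - 1) * occupancyProb P n s j) := by
  have hbound : ∀ j m, exp (c j * s.indicator 1 m) ≤ exp |c j| := fun j m => by
    by_cases hm : m ∈ s <;> simp [hm, le_abs_self]
  simp only [exp_sum]
  calc ∫ ω, ∏ j ∈ S, exp (c j * s.indicator 1 (freq ω j)) ∂sampleMeasure P n
      ≤ ∏ j ∈ S, ∫ ω, exp (c j * s.indicator 1 (freq ω j)) ∂sampleMeasure P n :=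
        integral_prod_freq_le P n (fun j m => (exp_pos _).le) hbound
          (hmono.imp (fun h j => exp_monotone.comp (h j)) fun h j =>
            exp_monotone.comp_antitone (h j)) S
    _ ≤ ∏ j ∈ S, exp ((exp (c j) - 1) * occupancyProb P n s j) :=
        Finset.prod_le_prod (fun j _ => integral_nonneg fun ω => (exp_pos _).le) fun j _ =>
          integral_exp_mul_indicator_freq_le P n (c j) s j

variable {n} {t B : ℝ}

lemma integrable_exp_mul_occupancySum
    (hB : ∀ ω : Fin n → ℕ, t * occupancySum w s ω ≤ B) :
    Integrable (fun ω => exp (t * occupancySum w s ω)) (sampleMeasure P n) :=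
  integrable_of_forall_abs_le (B := exp B) fun ω => by
    rw [abs_exp]
    exact exp_le_exp.2 (hB ω)

theorem mgf_occupancySum_le
    (hmono : (∀ j, Monotone fun m => t * w j * s.indicator 1 m) ∨
      ∀ j, Antitone fun m => t * w j * s.indicator 1 m)
    (hw : ∀ ω : Fin n → ℕ, Summable fun j => w j * s.indicator 1 (freq ω j))
    (hB : ∀ (ω : Fin n → ℕ) (S : Finset ℕ), t * ∑ j ∈ S, w j * s.indicator 1 (freq ω j) ≤ B)
    (hq : Summable fun j => (exp (t * w j) - 1) * occupancyProb P n s j) :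
    mgf (occupancySum w s) (sampleMeasure P n) t ≤
      exp (∑' j, (exp (t * w j) - 1) * occupancyProb P n s j) := by
  have hlim : Tendsto (fun N : ℕ => ∫ ω : Fin n → ℕ,
      exp (t * ∑ j ∈ Finset.range N, w j * s.indicator 1 (freq ω j)) ∂sampleMeasure P n) atTop
      (nhds (mgf (occupancySum w s) (sampleMeasure P n) t)) := by
    refine tendsto_integral_of_dominated_convergence (fun _ => exp B)
      (fun N => Measurable.of_discrete.aestronglyMeasurable) (integrable_const _)
      (fun N => .of_forall fun ω => ?_) (.of_forall fun ω => ?_)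
    · rw [norm_eq_abs, abs_exp]
      exact exp_le_exp.2 (hB ω _)
    · exact (continuous_exp.tendsto _).comp ((hw ω).hasSum.tendsto_sum_nat.const_mul t)
  refine le_of_tendsto_of_tendsto' hlim
    ((continuous_exp.tendsto _).comp hq.hasSum.tendsto_sum_nat) fun N => ?_
  simp only [Finset.mul_sum, ← mul_assoc]
  exact integral_exp_sum_indicator_freq_le P n hmono (Finset.range N)

variable {v x : ℝ}

lemma mul_indicator_one_nonneg (hw₀ : 0 ≤ w) (s : Set ℕ) (j m : ℕ) :
    0 ≤ w j * s.indicator 1 m :=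
  mul_nonneg (hw₀ j) (Set.indicator_nonneg (fun _ _ => zero_le_one) m)

lemma occupancySum_nonneg (hw₀ : 0 ≤ w) (s : Set ℕ) (ω : Fin n → ℕ) : 0 ≤ occupancySum w s ω :=
  tsum_nonneg fun j => mul_indicator_one_nonneg hw₀ s j _

lemma abs_exp_sub_one_le_neg {u : ℝ} (hu : u ≤ 0) : |exp u - 1| ≤ -u := by
  rw [abs_of_nonpos (by simpa using hu)]
  linarith [add_one_le_exp u]

lemma summable_exp_sub_one_mul_occupancyProb (hw₀ : 0 ≤ w) (ht : t ≤ 0)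
    (hq : Summable fun j => w j * occupancyProb P n s j) :
    Summable fun j => (exp (t * w j) - 1) * occupancyProb P n s j := by
  refine .of_norm_bounded (hq.mul_left (-t)) fun j => ?_
  calc ‖(exp (t * w j) - 1) * occupancyProb P n s j‖
      = |exp (t * w j) - 1| * occupancyProb P n s j := by
        rw [norm_mul, norm_eq_abs, norm_of_nonneg (occupancyProb_nonneg P n s j)]
    _ ≤ -(t * w j) * occupancyProb P n s j := by
        gcongr
        · exact occupancyProb_nonneg P n s j
        · exact abs_exp_sub_one_le_neg (mul_nonpos_of_nonpos_of_nonneg ht (hw₀ j))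
    _ = -t * (w j * occupancyProb P n s j) := by ring

lemma tsum_exp_sub_one_mul_occupancyProb_le (hw₀ : 0 ≤ w) (ht : t ≤ 0)
    (hq : Summable fun j => w j * occupancyProb P n s j)
    (hq₂ : Summable fun j => w j ^ 2 * occupancyProb P n s j) :
    ∑' j, (exp (t * w j) - 1) * occupancyProb P n s j ≤
      t * ∑' j, w j * occupancyProb P n s j +
        t ^ 2 / 2 * ∑' j, w j ^ 2 * occupancyProb P n s j := by
  rw [← tsum_mul_left, ← tsum_mul_left, ← (hq.mul_left _).tsum_add (hq₂.mul_left _)]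
  refine (summable_exp_sub_one_mul_occupancyProb P hw₀ ht hq).tsum_le_tsum (fun j => ?_)
    ((hq.mul_left _).add (hq₂.mul_left _))
  have hexp : exp (t * w j) ≤ 1 + t * w j + (t * w j) ^ 2 / 2 := by
    simpa using exp_neg_le_one_sub_add_sq_div_two (u := -(t * w j))
      (neg_nonneg.2 (mul_nonpos_of_nonpos_of_nonneg ht (hw₀ j)))
  linear_combination mul_le_mul_of_nonneg_left hexp (occupancyProb_nonneg P n s j)

lemma integral_occupancySum (hw₀ : 0 ≤ w) (hq : Summable fun j => w j * occupancyProb P n s j) :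
    ∫ ω, occupancySum w s ω ∂sampleMeasure P n = ∑' j, w j * occupancyProb P n s j := by
  have hint : ∀ j, ∫ ω, w j * s.indicator 1 (freq ω j) ∂sampleMeasure P n =
      w j * occupancyProb P n s j := fun j => by
    rw [integral_const_mul, integral_indicator_freq]
  simp only [← hint] at hq ⊢
  refine (integral_tsum_of_summable_integral_norm
    (fun j => (integrable_indicator_freq P n s j).const_mul (w j)) ?_).symm
  simpa only [norm_of_nonneg (mul_indicator_one_nonneg hw₀ s _ _)] using hq

theorem measureReal_occupancySum_le_sub_sqrt_le (hs : IsUpperSet s ∨ IsLowerSet s) (hw₀ : 0 ≤ w)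
    (hw : ∀ ω : Fin n → ℕ, Summable fun j => w j * s.indicator 1 (freq ω j))
    (hq : Summable fun j => w j * occupancyProb P n s j)
    (hq₂ : Summable fun j => w j ^ 2 * occupancyProb P n s j)
    (hvar : ∫ ω, occupancySum (w ^ 2) s ω ∂sampleMeasure P n ≤ v) (hv : 0 < v) (hx : 0 ≤ x) :
    (sampleMeasure P n).real {ω | occupancySum w s ω ≤
      ∫ ω', occupancySum w s ω' ∂sampleMeasure P n - √(2 * v * x)} ≤ exp (-x) := by
  rw [integral_occupancySum P (pow_nonneg hw₀ 2) hq₂] at hvar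
  rw [integral_occupancySum P hw₀ hq]
  refine measureReal_le_sub_sqrt_le_exp_neg hv hx (fun t ht => ?_) fun t ht => ?_
  · exact integrable_exp_mul_occupancySum P fun ω =>
      mul_nonpos_of_nonpos_of_nonneg ht (occupancySum_nonneg hw₀ s ω)
  · have htw : ∀ j, t * w j ≤ 0 := fun j => mul_nonpos_of_nonpos_of_nonneg ht (hw₀ j)
    refine (mgf_occupancySum_le P ?_ hw (B := 0) (fun ω S => ?_)
      (summable_exp_sub_one_mul_occupancyProb P hw₀ ht hq)).trans (exp_le_exp.2
        ((tsum_exp_sub_one_mul_occupancyProb_le P hw₀ ht hq hq₂).trans (by gcongr; exact hvar)))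
    · exact hs.symm.imp (fun hs j => (antitone_indicator_one hs).const_mul_of_nonpos (htw j))
        fun hs j => (monotone_indicator_one hs).const_mul_of_nonpos (htw j)
    · exact mul_nonpos_of_nonpos_of_nonneg ht
        (Finset.sum_nonneg fun j _ => mul_indicator_one_nonneg hw₀ s j _)

end Occupancy

/-! ### Binomial occupancy probabilities -/

section Binomial

variable (P : PMF ℕ) (n : ℕ)

lemma pReal_nonneg (j : ℕ) : 0 ≤ pReal P j := ENNReal.toReal_nonneg

lemma pReal_le_one (j : ℕ) : pReal P j ≤ 1 :=
  ENNReal.toReal_le_of_le_ofReal zero_le_one (by simpa using P.coe_le_one j)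

lemma summable_pReal : Summable (pReal P) :=
  ENNReal.summable_toReal P.tsum_coe_ne_top

lemma exists_pReal_pos : ∃ j, 0 < pReal P j :=
  P.support_nonempty.imp fun j hj =>
    ENNReal.toReal_pos ((P.mem_support_iff j).1 hj) (P.apply_ne_top j)

lemma integral_ite_eq (j : ℕ) (a b : ℝ) :
    ∫ k, (if k = j then a else b) ∂P.toMeasure = pReal P j * a + (1 - pReal P j) * b := by
  have hite : ∀ k : ℕ, (if k = j then a else b) = ({j} : Set ℕ).indicator (fun _ => a - b) k + b :=
    fun k => by by_cases hk : k = j <;> simp [hk]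
  have hj : P.toMeasure.real {j} = pReal P j := by
    simp [Measure.real, pReal, PMF.toMeasure_apply_singleton]
  simp only [hite]
  rw [integral_add ((integrable_const _).indicator .of_discrete) (integrable_const _),
    integral_indicator .of_discrete]
  simp only [integral_const, measureReal_restrict_apply_univ, hj, probReal_univ, smul_eq_mul]
  ring

lemma occupancyProb_succ (s : Set ℕ) (j : ℕ) :
    occupancyProb P (n + 1) s j =
      pReal P j * occupancyProb P n ((· + 1) ⁻¹' s) j
        + (1 - pReal P j) * occupancyProb P n s j := by
  have hcond : ∀ k, ∫ ω, s.indicator (1 : ℕ → ℝ)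
      ((freq ω + Pi.single k 1 : ℕ → ℕ) j) ∂sampleMeasure P n =
      if k = j then occupancyProb P n ((· + 1) ⁻¹' s) j else occupancyProb P n s j := fun k => by
    simp only [← integral_indicator_freq]
    split_ifs with hk
    · subst hk
      simp only [Pi.add_apply, Pi.single_eq_same]
      rfl
    · simp [Ne.symm hk]
  rw [← integral_indicator_freq, integral_freq_succ P n (f := fun y => s.indicator 1 (y j)) (B := 1)
    fun y => by by_cases hy : y j ∈ s <;> simp [hy]]
  simp only [hcond, integral_ite_eq]

lemma occupancyProb_zero_left (s : Set ℕ) (j : ℕ) : occupancyProb P 0 s j = s.indicator 1 0 := by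
  simp [← integral_indicator_freq, freq_of_isEmpty]

theorem occupancyProb_singleton (k j : ℕ) :
    occupancyProb P n {k} j = n.choose k * pReal P j ^ k * (1 - pReal P j) ^ (n - k) := by
  induction n generalizing k with
  | zero => cases k <;> simp [occupancyProb_zero_left]
  | succ n ih =>
    rw [occupancyProb_succ]
    cases k with
    | zero =>
      have hpre : (· + 1) ⁻¹' ({0} : Set ℕ) = ∅ := by ext; simp
      rw [hpre, ih]
      simp [occupancyProb, pow_succ']
    | succ k =>
      have hpre : (· + 1) ⁻¹' ({k + 1} : Set ℕ) = {k} := by ext; simp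
      rw [hpre, ih, ih, Nat.choose_succ_succ, Nat.succ_sub_succ]
      rcases lt_or_ge n (k + 1) with hnk | hkn
      · simp [Nat.choose_eq_zero_of_lt hnk]
        ring
      · rw [show n - k = n - (k + 1) + 1 by omega]
        push_cast
        ring

lemma occupancyProb_zero (j : ℕ) : occupancyProb P n {0} j = (1 - pReal P j) ^ n := by
  simp [occupancyProb_singleton]

lemma occupancyProb_Ici (r j : ℕ) :
    occupancyProb P n (Set.Ici r) j =
      occupancyProb P n {r} j + occupancyProb P n (Set.Ici (r + 1)) j := by
  rw [occupancyProb, occupancyProb, occupancyProb, ← measureReal_union _ .of_discrete]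
  · congr 1
    ext ω
    simp only [Set.mem_Ici, Set.mem_singleton_iff, Set.mem_union, Set.mem_ofPred_eq]
    lia
  · exact Set.disjoint_left.2 fun ω h₁ h₂ => by simp_all

lemma sum_freq_le {n : ℕ} (ω : Fin n → ℕ) (S : Finset ℕ) : ∑ j ∈ S, freq ω j ≤ n := by
  simpa only [freq, Finset.sum_card_fiberwise_eq_card_filter] using
    card_finset_fin_le (Finset.univ.filter fun i => ω i ∈ S)

lemma sum_indicator_Ici_freq_le {n r : ℕ} (hr : 1 ≤ r) (ω : Fin n → ℕ) (S : Finset ℕ) :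
    ∑ j ∈ S, (Set.Ici r).indicator (1 : ℕ → ℝ) (freq ω j) ≤ n := by
  calc ∑ j ∈ S, (Set.Ici r).indicator (1 : ℕ → ℝ) (freq ω j) ≤ ∑ j ∈ S, (freq ω j : ℝ) := by
        refine Finset.sum_le_sum fun j _ => Set.indicator_le' (fun m hm => ?_) (fun m _ => ?_) _
        · simpa using hr.trans hm
        · positivity
    _ ≤ n := by exact_mod_cast sum_freq_le ω S

lemma summable_indicator_Ici_freq {n r : ℕ} (hr : 1 ≤ r) (ω : Fin n → ℕ) :
    Summable fun j => (Set.Ici r).indicator (1 : ℕ → ℝ) (freq ω j) :=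
  summable_of_sum_le (fun _ => Set.indicator_nonneg (fun _ _ => zero_le_one) _)
    (sum_indicator_Ici_freq_le hr ω)

lemma summable_occupancyProb_Ici {r : ℕ} (hr : 1 ≤ r) :
    Summable (occupancyProb P n (Set.Ici r)) := by
  refine summable_of_sum_le (c := n) (occupancyProb_nonneg P n _) fun S => ?_
  simp only [← integral_indicator_freq]
  rw [← integral_finsetSum _ fun j _ => integrable_indicator_freq P n _ j]
  simpa using integral_mono
    (integrable_finsetSum S fun j _ => integrable_indicator_freq P n (Set.Ici r) j)
    (integrable_const (n : ℝ)) fun ω => sum_indicator_Ici_freq_le hr ω S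

end Binomial

/-! ### The Good–Turing identities -/

section GoodTuring

variable (P : PMF ℕ) {n r : ℕ}

lemma Ccount_eq_occupancySum (ω : Fin n → ℕ) (r : ℕ) :
    Ccount ω r = occupancySum 1 (Set.Ici r) ω := by
  simp [Ccount, occupancySum, Set.indicator_apply]

lemma Mcount_eq_occupancySum (ω : Fin n → ℕ) (r : ℕ) : Mcount ω r = occupancySum 1 {r} ω := by
  simp [Mcount, occupancySum, Set.indicator_apply]

lemma missingMass_eq_occupancySum (p : ℕ → ℝ) (ω : Fin n → ℕ) (r : ℕ) :
    missingMass p r ω = occupancySum (p ^ r) {0} ω := by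
  simp [missingMass, occupancySum, Set.indicator_apply]

lemma Ccount_nonneg (ω : Fin n → ℕ) (r : ℕ) : 0 ≤ Ccount ω r := by
  simpa only [Ccount_eq_occupancySum] using occupancySum_nonneg zero_le_one _ ω

lemma missingMass_nonneg (ω : Fin n → ℕ) (r : ℕ) : 0 ≤ missingMass (pReal P) r ω := by
  simpa only [missingMass_eq_occupancySum] using
    occupancySum_nonneg (pow_nonneg (pReal_nonneg P) r) _ ω

lemma Mcount_eq_Ccount_sub (hr : 1 ≤ r) (ω : Fin n → ℕ) :
    Mcount ω r = Ccount ω r - Ccount ω (r + 1) := by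
  simp only [Mcount_eq_occupancySum, Ccount_eq_occupancySum, occupancySum, Pi.one_apply, one_mul]
  rw [← (summable_indicator_Ici_freq hr ω).tsum_sub
    (summable_indicator_Ici_freq (Nat.le_add_left 1 r) ω)]
  refine tsum_congr fun j => ?_
  simp only [Set.indicator_apply, Set.mem_singleton_iff, Set.mem_Ici, Pi.one_apply]
  split_ifs <;> first | lia | simp

lemma summable_occupancyProb_singleton {k : ℕ} (hk : 1 ≤ k) :
    Summable (occupancyProb P n {k}) :=
  .of_nonneg_of_le (occupancyProb_nonneg P n _)
    (occupancyProb_mono P n (by simpa using hk)) (summable_occupancyProb_Ici P n le_rfl)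

lemma summable_pReal_pow_mul {u : ℕ → ℝ} (hr : 1 ≤ r) (hu₀ : 0 ≤ u) (hu₁ : u ≤ 1) :
    Summable fun j => pReal P j ^ r * u j :=
  .of_nonneg_of_le (fun j => mul_nonneg (pow_nonneg (pReal_nonneg P j) r) (hu₀ j))
    (fun j => calc pReal P j ^ r * u j ≤ pReal P j ^ r :=
          mul_le_of_le_one_right (pow_nonneg (pReal_nonneg P j) r) (hu₁ j)
      _ ≤ pReal P j := pow_le_of_le_one (pReal_nonneg P j) (pReal_le_one P j) (by lia))
    (summable_pReal P)

lemma integral_Ccount (hr : 1 ≤ r) :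
    ∫ ω, Ccount ω r ∂sampleMeasure P n = ∑' j, occupancyProb P n (Set.Ici r) j := by
  simpa [Ccount_eq_occupancySum] using integral_occupancySum P (n := n) (zero_le_one' (ℕ → ℝ))
    (by simpa using summable_occupancyProb_Ici P n hr)

lemma integral_Mcount (hr : 1 ≤ r) :
    ∫ ω, Mcount ω r ∂sampleMeasure P n = ∑' j, occupancyProb P n {r} j := by
  simpa [Mcount_eq_occupancySum] using integral_occupancySum P (n := n) (zero_le_one' (ℕ → ℝ))
    (by simpa using summable_occupancyProb_singleton P hr)

lemma integral_Mcount_eq_integral_Ccount_sub (hr : 1 ≤ r) :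
    ∫ ω, Mcount ω r ∂sampleMeasure P n =
      ∫ ω, Ccount ω r ∂sampleMeasure P n - ∫ ω, Ccount ω (r + 1) ∂sampleMeasure P n := by
  have hr' : 1 ≤ r + 1 := Nat.le_add_left 1 r
  rw [integral_Ccount P hr, integral_Ccount P hr', integral_Mcount P hr,
    ← (summable_occupancyProb_Ici P n hr).tsum_sub (summable_occupancyProb_Ici P n hr')]
  simp [occupancyProb_Ici P n r]

lemma integral_Mcount_le_integral_Ccount {k : ℕ} (hr : 1 ≤ r) (hrk : r ≤ k) :
    ∫ ω, Mcount ω k ∂sampleMeasure P n ≤ ∫ ω, Ccount ω r ∂sampleMeasure P n := by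
  rw [integral_Mcount P (hr.trans hrk), integral_Ccount P hr]
  exact (summable_occupancyProb_singleton P (hr.trans hrk)).tsum_le_tsum
    (occupancyProb_mono P n (by simpa using hrk)) (summable_occupancyProb_Ici P n hr)

lemma integral_Ccount_succ_le (hr : 1 ≤ r) :
    ∫ ω, Ccount ω (r + 1) ∂sampleMeasure P n ≤ ∫ ω, Ccount ω r ∂sampleMeasure P n := by
  rw [integral_Ccount P hr, integral_Ccount P (Nat.le_add_left 1 r)]
  exact (summable_occupancyProb_Ici P n (Nat.le_add_left 1 r)).tsum_le_tsum
    (occupancyProb_mono P n (Set.Ici_subset_Ici.2 r.le_succ)) (summable_occupancyProb_Ici P n hr)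

lemma integral_Ccount_pos (hr : 1 ≤ r) (hrn : r ≤ n) :
    0 < ∫ ω, Ccount ω r ∂sampleMeasure P n := by
  rw [integral_Ccount P hr]
  obtain ⟨j, hj⟩ := exists_pReal_pos P
  refine (summable_occupancyProb_Ici P n hr).tsum_pos (occupancyProb_nonneg P n _) j ?_
  calc 0 < pReal P j ^ n := pow_pos hj n
    _ = occupancyProb P n {n} j := by simp [occupancyProb_singleton]
    _ ≤ occupancyProb P n (Set.Ici r) j := occupancyProb_mono P n (by simpa using hrn) j

lemma one_sub_pReal_nonneg (j : ℕ) : 0 ≤ 1 - pReal P j := sub_nonneg.2 (pReal_le_one P j)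

lemma one_sub_pReal_le_one (j : ℕ) : 1 - pReal P j ≤ 1 := sub_le_self _ (pReal_nonneg P j)

lemma summable_pReal_pow_mul_one_sub_pow (n : ℕ) (hr : 1 ≤ r) :
    Summable fun j => pReal P j ^ r * (1 - pReal P j) ^ n :=
  summable_pReal_pow_mul P hr (fun j => pow_nonneg (one_sub_pReal_nonneg P j) n)
    fun j => pow_le_one₀ (one_sub_pReal_nonneg P j) (one_sub_pReal_le_one P j)

lemma integral_missingMass (hr : 1 ≤ r) :
    ∫ ω, missingMass (pReal P) r ω ∂sampleMeasure P n =
      ∑' j, pReal P j ^ r * (1 - pReal P j) ^ n := by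
  simpa [missingMass_eq_occupancySum, occupancyProb_zero] using
    integral_occupancySum P (n := n) (s := {0}) (pow_nonneg (pReal_nonneg P) r)
      (by simpa [occupancyProb_zero] using summable_pReal_pow_mul_one_sub_pow P n hr)

lemma integral_missingMass_anti {m : ℕ} (hr : 1 ≤ r) (hmn : m ≤ n) :
    ∫ ω, missingMass (pReal P) r ω ∂sampleMeasure P n ≤
      ∫ ω, missingMass (pReal P) r ω ∂sampleMeasure P m := by
  rw [integral_missingMass P hr, integral_missingMass P hr]
  refine (summable_pReal_pow_mul_one_sub_pow P n hr).tsum_le_tsum (fun j => ?_)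
    (summable_pReal_pow_mul_one_sub_pow P m hr)
  exact mul_le_mul_of_nonneg_left (pow_le_pow_of_le_one (one_sub_pReal_nonneg P j)
    (one_sub_pReal_le_one P j) hmn) (pow_nonneg (pReal_nonneg P j) r)

theorem integral_Mcount_eq_choose_mul_integral_missingMass (hr : 1 ≤ r) :
    ∫ ω, Mcount ω r ∂sampleMeasure P n =
      n.choose r * ∫ ω, missingMass (pReal P) r ω ∂sampleMeasure P (n - r) := by
  rw [integral_Mcount P hr, integral_missingMass P hr, ← tsum_mul_left]
  simp only [occupancyProb_singleton, mul_assoc]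

lemma integral_missingMass_two_mul_le (hr : 1 ≤ r) (hrn : 2 * r ≤ n) :
    ∫ ω, missingMass (pReal P) (2 * r) ω ∂sampleMeasure P n ≤
      (∫ ω, Ccount ω r ∂sampleMeasure P n) / n.choose (2 * r) := by
  have hr₂ : 1 ≤ 2 * r := by lia
  have hchoose : (0 : ℝ) < n.choose (2 * r) := by exact_mod_cast Nat.choose_pos hrn
  rw [le_div_iff₀' hchoose]
  calc n.choose (2 * r) * ∫ ω, missingMass (pReal P) (2 * r) ω ∂sampleMeasure P n
      ≤ n.choose (2 * r) *
          ∫ ω, missingMass (pReal P) (2 * r) ω ∂sampleMeasure P (n - 2 * r) := by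
        gcongr
        exact integral_missingMass_anti P hr₂ (n.sub_le _)
    _ = ∫ ω, Mcount ω (2 * r) ∂sampleMeasure P n :=
        (integral_Mcount_eq_choose_mul_integral_missingMass P hr₂).symm
    _ ≤ ∫ ω, Ccount ω r ∂sampleMeasure P n :=
        integral_Mcount_le_integral_Ccount P hr (by lia)

lemma one_sub_pow_succ_le (r d : ℕ) {p : ℝ} (hp₀ : 0 ≤ p) (hp₁ : p ≤ 1) :
    (1 - p) ^ (d + 1) ≤ (1 - p) ^ (d + 1 + r) + r * p * (1 - p) ^ d := by
  have hq : 0 ≤ 1 - p := sub_nonneg.2 hp₁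
  have hbernoulli : 1 + r * -p ≤ (1 + -p) ^ r := one_add_mul_le_pow (by linarith) r
  rw [← sub_eq_add_neg] at hbernoulli
  calc (1 - p) ^ (d + 1) = (1 - p) ^ (d + 1) * (1 + r * -p) + r * p * (1 - p) ^ (d + 1) := by ring
    _ ≤ (1 - p) ^ (d + 1) * (1 - p) ^ r + r * p * (1 - p) ^ d := by
        gcongr ?_ + _ * ?_
        · gcongr
        · exact pow_le_pow_of_le_one hq (by linarith) d.le_succ
    _ = (1 - p) ^ (d + 1 + r) + r * p * (1 - p) ^ d := by rw [pow_add _ (d + 1)]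

theorem integral_missingMass_sub_le (hr : 1 ≤ r) (hrn : r < n) :
    ∫ ω, missingMass (pReal P) r ω ∂sampleMeasure P (n - r) ≤
      ∫ ω, missingMass (pReal P) r ω ∂sampleMeasure P n +
        r / n.choose (r + 1) * ∫ ω, Mcount ω (r + 1) ∂sampleMeasure P n := by
  have hr' : 1 ≤ r + 1 := Nat.le_add_left 1 r
  have hchoose : (n.choose (r + 1) : ℝ) ≠ 0 := by exact_mod_cast (Nat.choose_pos hrn).ne'
  have hs := summable_pReal_pow_mul_one_sub_pow P n hr
  have hs' := (summable_pReal_pow_mul_one_sub_pow P (n - (r + 1)) hr').mul_left (r : ℝ)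
  rw [integral_Mcount_eq_choose_mul_integral_missingMass P hr', ← mul_assoc,
    div_mul_cancel₀ _ hchoose, integral_missingMass P hr, integral_missingMass P hr,
    integral_missingMass P hr', ← tsum_mul_left, ← hs.tsum_add hs']
  refine (summable_pReal_pow_mul_one_sub_pow P (n - r) hr).tsum_le_tsum (fun j => ?_) (hs.add hs')
  obtain ⟨d, rfl⟩ := Nat.exists_eq_add_of_lt hrn
  rw [show r + d + 1 - r = d + 1 by lia, show r + d + 1 - (r + 1) = d by lia,
    show r + d + 1 = d + 1 + r by lia]
  linear_combination mul_le_mul_of_nonneg_left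
    (one_sub_pow_succ_le r d (pReal_nonneg P j) (pReal_le_one P j))
    (pow_nonneg (pReal_nonneg P j) r)

end GoodTuring

/-! ### Tail bounds for the missing mass and the occupancy counts -/

section Tails

variable (P : PMF ℕ) {n r : ℕ} {v x : ℝ}

lemma measureReal_Ccount_le_sub_sqrt_le (hr : 1 ≤ r)
    (hv : ∫ ω, Ccount ω r ∂sampleMeasure P n ≤ v) (hv₀ : 0 < v) (hx : 0 ≤ x) :
    (sampleMeasure P n).real {ω | Ccount ω r ≤
      ∫ ω', Ccount ω' r ∂sampleMeasure P n - √(2 * v * x)} ≤ exp (-x) := by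
  have hq := summable_occupancyProb_Ici P n hr
  simp only [Ccount_eq_occupancySum] at hv ⊢
  exact measureReal_occupancySum_le_sub_sqrt_le P (.inl (isUpperSet_Ici r)) zero_le_one
    (fun ω => by simpa using summable_indicator_Ici_freq hr ω) (by simpa using hq)
    (by simpa using hq) (by simpa using hv) hv₀ hx

lemma measureReal_missingMass_le_sub_sqrt_le (hr : 1 ≤ r)
    (hv : ∫ ω, missingMass (pReal P) (2 * r) ω ∂sampleMeasure P n ≤ v) (hv₀ : 0 < v)
    (hx : 0 ≤ x) :
    (sampleMeasure P n).real {ω | missingMass (pReal P) r ω ≤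
      ∫ ω', missingMass (pReal P) r ω' ∂sampleMeasure P n - √(2 * v * x)} ≤ exp (-x) := by
  have hlower : IsLowerSet ({0} : Set ℕ) := fun a b hba ha => by simp_all
  simp only [missingMass_eq_occupancySum] at hv ⊢
  rw [mul_comm, pow_mul] at hv
  refine measureReal_occupancySum_le_sub_sqrt_le P (.inr hlower) (pow_nonneg (pReal_nonneg P) r)
    (fun ω => ?_) ?_ ?_ hv hv₀ hx
  · exact summable_pReal_pow_mul P hr (fun j => Set.indicator_nonneg (fun _ _ => zero_le_one) _)
      fun j => Set.indicator_le_self' (fun _ _ => zero_le_one) _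
  · simpa [occupancyProb_zero] using summable_pReal_pow_mul_one_sub_pow P n hr
  · simpa [occupancyProb_zero, ← pow_mul] using
      summable_pReal_pow_mul_one_sub_pow P n (r := r * 2) (by lia)

lemma Ccount_le (hr : 1 ≤ r) (ω : Fin n → ℕ) : Ccount ω r ≤ n := by
  simpa [Ccount_eq_occupancySum, occupancySum] using
    (summable_indicator_Ici_freq hr ω).tsum_le_of_sum_le (sum_indicator_Ici_freq_le hr ω)

lemma mgf_Ccount_le (hr : 1 ≤ r) {t : ℝ} (ht : 0 ≤ t) :
    mgf (fun ω => Ccount ω r) (sampleMeasure P n) t ≤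
      exp ((exp t - 1) * ∫ ω, Ccount ω r ∂sampleMeasure P n) := by
  rw [integral_Ccount P hr, ← tsum_mul_left]
  simp only [Ccount_eq_occupancySum]
  simpa using mgf_occupancySum_le P (w := 1) (t := t) (B := t * n)
    (.inl fun j => (monotone_indicator_one (isUpperSet_Ici r)).const_mul (by simpa using ht))
    (fun ω => by simpa using summable_indicator_Ici_freq hr ω)
    (fun ω S => by gcongr; simpa using sum_indicator_Ici_freq_le hr ω S)
    (by simpa using (summable_occupancyProb_Ici P n hr).mul_left (exp t - 1))

lemma measureReal_add_sqrt_add_le_Ccount_le (hr : 1 ≤ r) (hrn : r ≤ n) (hx : 0 ≤ x) :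
    (sampleMeasure P n).real {ω | ∫ ω', Ccount ω' r ∂sampleMeasure P n +
      √(2 * (∫ ω', Ccount ω' r ∂sampleMeasure P n) * x) + x ≤ Ccount ω r} ≤ exp (-x) := by
  refine measureReal_add_sqrt_add_le_exp_neg (integral_Ccount_pos P hr hrn) hx (fun t ht => ?_)
    fun t ht => mgf_Ccount_le P hr ht
  simp only [Ccount_eq_occupancySum]
  refine integrable_exp_mul_occupancySum P (B := t * n) fun ω => ?_
  gcongr
  exact (Ccount_eq_occupancySum ω r).ge.trans (Ccount_le hr ω)

end Tails

/-! ### The confidence bound -/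

section ConfidenceBound

variable {V C x : ℝ}

lemma sqrt_le_sqrt_add_sqrt_two_mul (hV : 0 ≤ V) (hC : 0 ≤ C) (h : V - √(2 * V * x) ≤ C) :
    √V ≤ √C + √(2 * x) := by
  rw [mul_comm 2, mul_assoc, sqrt_mul hV] at h
  by_contra! hlt
  have hsq := mul_lt_mul'' (show √C < √V by linarith [sqrt_nonneg (2 * x)])
    (show √C < √V - √(2 * x) by linarith) (sqrt_nonneg C) (sqrt_nonneg C)
  linarith [mul_self_sqrt hV, mul_self_sqrt hC]

lemma sqrt_two_mul_mul_le (hV : 0 ≤ V) (hC : 0 ≤ C) (hx : 0 ≤ x) (h : V - √(2 * V * x) ≤ C) :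
    √(2 * V * x) ≤ √2 * √(C * x) + 2 * x :=
  calc √(2 * V * x) = √V * √(2 * x) := by rw [← sqrt_mul hV]; ring_nf
    _ ≤ (√C + √(2 * x)) * √(2 * x) := by gcongr; exact sqrt_le_sqrt_add_sqrt_two_mul hV hC h
    _ = √2 * √(C * x) + 2 * x := by
        rw [add_mul, mul_self_sqrt (by positivity), ← sqrt_mul hC, ← sqrt_mul zero_le_two]
        ring_nf

lemma le_two_mul_add_four_mul (hV : 0 ≤ V) (hC : 0 ≤ C) (hx : 0 ≤ x) (h : V - √(2 * V * x) ≤ C) :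
    V ≤ 2 * C + 4 * x :=
  calc V = √V ^ 2 := (sq_sqrt hV).symm
    _ ≤ (√C + √(2 * x)) ^ 2 := by gcongr; exact sqrt_le_sqrt_add_sqrt_two_mul hV hC h
    _ ≤ 2 * (√C ^ 2 + √(2 * x) ^ 2) := add_sq_le
    _ = 2 * C + 4 * x := by rw [sq_sqrt hC, sq_sqrt (by positivity)]; ring

theorem Lbound_le_of_gtEst_le {n r : ℕ} {ω : Fin n → ℕ} {θ : ℝ} (hx : 0 ≤ x)
    (h : gtEst ω r ≤ θ + (√2 * √(Ccount ω r * x) + 2 * x) / √(n.choose (2 * r))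
      + (2 * (√2 * √(Ccount ω r * x)) + 5 * x) / n.choose r
      + r / n.choose (r + 1) * (2 * Ccount ω r + 4 * x)) :
    Lbound r x ω ≤ θ := by
  have hslack : 0 ≤ 2 * (x / √(n.choose (2 * r))) + 11 / 3 * (x / n.choose r)
      + 12 * (r / n.choose (r + 1) * x) := by positivity
  rw [Lbound, sqrt_div zero_le_two]
  linear_combination h + hslack

variable (P : PMF ℕ) {n r : ℕ} {ω : Fin n → ℕ}

lemma gtEst_le_of_Ccount_le {e e' : ℝ} (hr : 1 ≤ r) (hrn : r ≤ n)
    (h : Ccount ω r ≤ ∫ ω', Ccount ω' r ∂sampleMeasure P n + e)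
    (h' : ∫ ω', Ccount ω' (r + 1) ∂sampleMeasure P n - e' ≤ Ccount ω (r + 1)) :
    gtEst ω r ≤
      ∫ ω', missingMass (pReal P) r ω' ∂sampleMeasure P (n - r) + (e + e') / n.choose r := by
  have hchoose : (0 : ℝ) < n.choose r := by exact_mod_cast Nat.choose_pos hrn
  have hmean := integral_Mcount_eq_choose_mul_integral_missingMass P (n := n) hr
  rw [integral_Mcount_eq_integral_Ccount_sub P hr] at hmean
  rw [gtEst, div_le_iff₀ hchoose, add_mul, div_mul_cancel₀ _ hchoose.ne',
    Mcount_eq_Ccount_sub hr]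
  linarith

theorem gtEst_le_missingMass_add (hr : 1 ≤ r) (hrn : r < n) (hx : 0 ≤ x)
    (hV : ∫ ω', Ccount ω' r ∂sampleMeasure P n = V)
    (hCV : Ccount ω r ≤ V + (√(2 * V * x) + x)) (hVC : V - √(2 * V * x) ≤ Ccount ω r)
    (hVC' : ∫ ω', Ccount ω' (r + 1) ∂sampleMeasure P n - √(2 * V * x) ≤ Ccount ω (r + 1))
    (hθ : ∫ ω', missingMass (pReal P) r ω' ∂sampleMeasure P n
      - √(2 * (V / n.choose (2 * r)) * x) ≤ missingMass (pReal P) r ω) :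
    gtEst ω r ≤ missingMass (pReal P) r ω
      + (√2 * √(Ccount ω r * x) + 2 * x) / √(n.choose (2 * r))
      + (2 * (√2 * √(Ccount ω r * x)) + 5 * x) / n.choose r
      + r / n.choose (r + 1) * (2 * Ccount ω r + 4 * x) := by
  have hV₀ : 0 ≤ V := hV ▸ integral_nonneg fun ω' => Ccount_nonneg ω' r
  have hsqrt := sqrt_two_mul_mul_le hV₀ (Ccount_nonneg ω r) hx hVC
  have hbias : ∫ ω', missingMass (pReal P) r ω' ∂sampleMeasure P (n - r) ≤
      ∫ ω', missingMass (pReal P) r ω' ∂sampleMeasure P n + r / n.choose (r + 1) * V := by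
    refine (integral_missingMass_sub_le P hr hrn).trans ?_
    gcongr
    exact hV ▸ integral_Mcount_le_integral_Ccount P hr r.le_succ
  have hmean : ∫ ω', missingMass (pReal P) r ω' ∂sampleMeasure P n ≤
      missingMass (pReal P) r ω + √(2 * V * x) / √(n.choose (2 * r)) := by
    rw [← sqrt_div (by positivity), show 2 * V * x / n.choose (2 * r) =
      2 * (V / n.choose (2 * r)) * x by ring]
    linarith
  calc gtEst ω r
      ≤ ∫ ω', missingMass (pReal P) r ω' ∂sampleMeasure P (n - r)
          + (√(2 * V * x) + x + √(2 * V * x)) / n.choose r :=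
        gtEst_le_of_Ccount_le P hr hrn.le (by rwa [hV]) hVC'
    _ ≤ missingMass (pReal P) r ω + √(2 * V * x) / √(n.choose (2 * r))
          + (2 * √(2 * V * x) + x) / n.choose r + r / n.choose (r + 1) * V := by
        rw [show √(2 * V * x) + x + √(2 * V * x) = 2 * √(2 * V * x) + x by ring]
        linarith
    _ ≤ missingMass (pReal P) r ω
          + (√2 * √(Ccount ω r * x) + 2 * x) / √(n.choose (2 * r))
          + (2 * (√2 * √(Ccount ω r * x)) + 5 * x) / n.choose r
          + r / n.choose (r + 1) * (2 * Ccount ω r + 4 * x) := by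
        gcongr _ + ?_ / _ + ?_ / _ + _ * ?_
        · linarith
        · exact le_two_mul_add_four_mul hV₀ (Ccount_nonneg ω r) hx hVC

theorem missingMass_confidence_lower_general (P : PMF ℕ) (r n : ℕ) (hr : 1 ≤ r) (hn : 2 * r ≤ n)
    (x : ℝ) (hx : 0 ≤ x) :
    1 - ENNReal.ofReal (4 * Real.exp (-x)) ≤
      sampleMeasure P n {ω | max 0 (Lbound r x ω) ≤ missingMass (pReal P) r ω} := by
  have hrn : r < n := by lia
  have hV₀ := integral_Ccount_pos P hr hrn.le
  have hV' := integral_Ccount_succ_le P (n := n) hr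
  have hvar := integral_missingMass_two_mul_le P hr hn
  have hchoose : (0 : ℝ) < n.choose (2 * r) := by exact_mod_cast Nat.choose_pos hn
  have h₁ := measureReal_add_sqrt_add_le_Ccount_le P hr hrn.le hx
  generalize hV : ∫ ω, Ccount ω r ∂sampleMeasure P n = V at *
  have h₂ := measureReal_Ccount_le_sub_sqrt_le P hr hV.le hV₀ hx
  have h₃ := measureReal_Ccount_le_sub_sqrt_le P (Nat.le_add_left 1 r) hV' hV₀ hx
  have h₄ := measureReal_missingMass_le_sub_sqrt_le P hr hvar (div_pos hV₀ hchoose) hx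
  refine one_sub_four_mul_le_of_measureReal_le .of_discrete h₁ h₂ h₃ h₄ fun ω hω => ?_
  simp only [Set.mem_union, Set.mem_ofPred_eq, not_or, not_le, hV] at hω
  obtain ⟨⟨⟨hCV, hVC⟩, hVC'⟩, hθ⟩ := hω
  exact max_le (missingMass_nonneg P ω r) (Lbound_le_of_gtEst_le hx
    (gtEst_le_missingMass_add P hr hrn hx hV (by linarith) hVC.le hVC'.le hθ.le))

end ConfidenceBound

/-- Lower confidence bound for the `r`-order missing mass: with probability at least
`1 - 6 e^{-x}`, we have `θ_r(P;X_n) ≥ max(0, 𝔏_{n,r}(x))`. -/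
theorem missingMass_confidence_lower (P : PMF ℕ) (r n : ℕ) (hr : 1 ≤ r) (hn : 2 * r < n)
    (x : ℝ) (hx : 0 < x) :
    1 - ENNReal.ofReal (6 * Real.exp (-x)) ≤
      sampleMeasure P n
        {ω | max 0 (Lbound r x ω) ≤ missingMass (pReal P) r ω} :=
  (tsub_le_tsub_left (ENNReal.ofReal_le_ofReal (by gcongr; norm_num)) 1).trans
    (missingMass_confidence_lower_general P r n hr hn.le x hx.le)

end
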